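/- Let R₀ > 0, 0 < A₀ < π/2, τ = (1/4)·ln(π/(π − 2A₀)), and T = (R₀²/4)·(1 − e^{−4τ}). For t ∈ [0, T) set t̄(t) = (1/4)·ln(R₀²/(R₀² − 4t)). Let C ≥ 0 and let κ : [0, T) → ℝ satisfy (τ − t̄(t))·κ(t)² ≤ C for every t ∈ [0, T). Then (T − t)·(4 + κ(t)²)/(R₀² − 4t) < 1 + C for every t ∈ [0, T). In particular, T = A₀·R₀²/(2π) and (T − t)/(R₀² − 4t) = (1 − e^{4(t̄(t) − τ)})/4. -/

import Mathlib

/-! Write `D = R₀² - 4t`. Since `exp (-4τ) = (π - 2A₀)/π` and `exp (4 t̄) = R₀²/D`, one has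
`(T - t)/D = (1 - exp (4 (t̄ - τ)))/4`. This is smaller than `1/4`, as the exponential is positive,
and at most `τ - t̄`, by `1 + x ≤ exp x`. The first estimate bounds the contribution of the summand
`4` by `1`, strictly; the second, with the Type I bound on the curve, bounds that of `κ²` by `C`. -/


/-- Type I bound for the surface flow (Remark 3.7): if the curve flow has a Type I
singularity, i.e. `(τ - t̄(t))·κ(t)² ≤ C`, then
`(T - t)·(4 + κ(t)²)/(R₀² - 4t) < 1 + C` on `[0, T)`; moreover `T = A₀R₀²/(2π)` and
`(T - t)/(R₀² - 4t) = (1 - e^{4(t̄(t) - τ)})/4`. -/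
theorem type_I_surface_bound (R₀ A₀ : ℝ) (hR₀ : 0 < R₀) (hA₀ : 0 < A₀)
    (hA₀' : A₀ < Real.pi / 2)
    (τ T : ℝ)
    (hτ : τ = (1 / 4) * Real.log (Real.pi / (Real.pi - 2 * A₀)))
    (hT : T = (R₀ ^ 2 / 4) * (1 - Real.exp (-4 * τ)))
    (tb : ℝ → ℝ)
    (htb : ∀ t : ℝ, tb t = (1 / 4) * Real.log (R₀ ^ 2 / (R₀ ^ 2 - 4 * t)))
    (C : ℝ) (hC : 0 ≤ C) (κ : ℝ → ℝ)
    (hκ : ∀ t ∈ Set.Ico (0 : ℝ) T, (τ - tb t) * κ t ^ 2 ≤ C) :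
    (∀ t ∈ Set.Ico (0 : ℝ) T,
      (T - t) * (4 + κ t ^ 2) / (R₀ ^ 2 - 4 * t) < 1 + C) ∧
    T = A₀ * R₀ ^ 2 / (2 * Real.pi) ∧
    (∀ t ∈ Set.Ico (0 : ℝ) T,
      (T - t) / (R₀ ^ 2 - 4 * t) = (1 - Real.exp (4 * (tb t - τ))) / 4) := by
  have hpi := Real.pi_pos
  have hR2 : 0 < R₀ ^ 2 := by positivity
  have hden : 0 < Real.pi - 2 * A₀ := by linarith
  have hE : Real.exp (-4 * τ) = (Real.pi - 2 * A₀) / Real.pi := by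
    have h : -4 * τ = -Real.log (Real.pi / (Real.pi - 2 * A₀)) := by rw [hτ]; ring
    rw [h, Real.exp_neg, Real.exp_log (by positivity), inv_div]
  -- `4T < R₀²`, so the logarithm defining `tb` has a positive argument throughout `[0, T)`.
  have hD : ∀ t ∈ Set.Ico (0 : ℝ) T, 0 < R₀ ^ 2 - 4 * t := by
    intro t ht
    have h := ht.2
    have h2 := mul_pos hR2 (Real.exp_pos (-4 * τ))
    rw [hT] at h
    linarith
  have key : ∀ t ∈ Set.Ico (0 : ℝ) T,
      (T - t) / (R₀ ^ 2 - 4 * t) = (1 - Real.exp (4 * (tb t - τ))) / 4 := by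
    intro t ht
    have hDt := hD t ht
    have h : 4 * (tb t - τ) = Real.log (R₀ ^ 2 / (R₀ ^ 2 - 4 * t)) + -4 * τ := by
      rw [htb]; ring
    rw [h, Real.exp_add, Real.exp_log (by positivity), hT]
    field_simp
    ring
  refine ⟨fun t ht => ?_, ?_, key⟩
  · have hk := key t ht
    have hle : (T - t) / (R₀ ^ 2 - 4 * t) ≤ τ - tb t := by
      have := Real.add_one_le_exp (4 * (tb t - τ))
      linarith
    have h1 := mul_le_mul_of_nonneg_right hle (sq_nonneg (κ t))
    have h2 := hκ t ht
    have h3 := Real.exp_pos (4 * (tb t - τ))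
    have h4 : (T - t) * (4 + κ t ^ 2) / (R₀ ^ 2 - 4 * t)
        = 4 * ((T - t) / (R₀ ^ 2 - 4 * t)) + (T - t) / (R₀ ^ 2 - 4 * t) * κ t ^ 2 := by ring
    rw [h4]
    linarith
  · rw [hT, hE]
    field_simp
    ring
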